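/- Let n ≥ 1 and let f be a Boolean function on n variables with f⁻¹(1) nonempty. Let Π be a subgroup of the group of permutations of {0,1}^n such that for every π ∈ Π: f ∘ π = f, and for every CNF formula φ with φ⁻¹(1) ⊆ f⁻¹(1) there exists a CNF formula φ_π with φ_π⁻¹(1) ⊆ f⁻¹(1), φ = φ_π ∘ π, and |φ_π| = |φ|. Then there exists a distribution μ on f⁻¹(1) such that μ ∘ π = μ for every π ∈ Π and D(f) = D_μ(f). -/

import Mathlib

/-! The map `μ ↦ D_μ(f)` is a maximum of finitely many linear functionals, hence continuous
(`Dmu_continuous`), and the distributions on `f⁻¹(1)` form a nonempty compact set, so some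
distribution `μ` attains `D(f)` (`exists_minimizer`). Averaging `μ` over the finite group `G` gives
a `G`-invariant distribution (`isDistOn_avg`, `avg_invariant`). The averaging cannot increase the
value (`Dmu_avg_le`): the probability of `φ` under `μ ∘ π` equals that of its transported formula
`φ_π` under `μ`, and `φ_π` has the same size, so each summand is at most `D_μ(f) * |φ|`. The average
therefore attains the minimum as well. -/

/-- A literal over `n` variables: a coordinate `x_i` (if `neg = false`)
or its negation `¬ x_i` (if `neg = true`). -/
structure Lit (n : ℕ) where
  idx : Fin n
  neg : Bool
deriving DecidableEq

/-- Evaluation of a literal at an assignment. -/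
def Lit.eval {n : ℕ} (l : Lit n) (x : Fin n → Bool) : Bool :=
  if l.neg then !(x l.idx) else x l.idx

/-- A clause: a finite set of literals, evaluated as their disjunction. -/
abbrev Clause (n : ℕ) := Finset (Lit n)

/-- A CNF formula: a finite set of clauses, evaluated as their conjunction.
Its size is its number of clauses (`Finset.card`). -/
abbrev CNF (n : ℕ) := Finset (Clause n)

/-- `φ.sat x` means the CNF formula `φ` evaluates to `1` at `x`. -/
def CNF.sat {n : ℕ} (φ : CNF n) (x : Fin n → Bool) : Prop :=
  ∀ c ∈ φ, ∃ l ∈ c, l.eval x = true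

instance {n : ℕ} (φ : CNF n) (x : Fin n → Bool) : Decidable (φ.sat x) :=
  inferInstanceAs (Decidable (∀ c ∈ φ, ∃ l ∈ c, Lit.eval l x = true))

/-- `φ⁻¹(1) ⊆ f⁻¹(1)`: the formula does not err on inputs where `f` is `0`. -/
def CNF.onesided {n : ℕ} (φ : CNF n) (f : (Fin n → Bool) → Bool) : Prop :=
  ∀ x, φ.sat x → f x = true

/-- A CNF formula is monotone if none of its literals is negated. -/
def CNF.mono {n : ℕ} (φ : CNF n) : Prop :=
  ∀ c ∈ φ, ∀ l ∈ c, l.neg = false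

/-- A distribution on `f⁻¹(1)`: nonnegative, supported on `f⁻¹(1)`, summing to 1. -/
def IsDistOn {n : ℕ} (μ : (Fin n → Bool) → ℝ) (f : (Fin n → Bool) → Bool) : Prop :=
  (∀ x, 0 ≤ μ x) ∧ (∀ x, f x = false → μ x = 0) ∧ (∑ x, μ x) = 1

/-- `Pr_{x ∼ μ}[φ(x) = 1]`. -/
noncomputable def CNF.pr {n : ℕ} (φ : CNF n) (μ : (Fin n → Bool) → ℝ) : ℝ :=
  ∑ x, if φ.sat x then μ x else 0

/-- `D_μ(f)`: the maximum, over CNF formulas `φ` with `φ⁻¹(1) ⊆ f⁻¹(1)` and `|φ| ≥ 1`,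
of `Pr_{x∼μ}[φ(x)=1] / |φ|` (0 if there is no such formula). -/
noncomputable def Dmu {n : ℕ} (f : (Fin n → Bool) → Bool) (μ : (Fin n → Bool) → ℝ) : ℝ :=
  sSup {r : ℝ | ∃ φ : CNF n, φ.onesided f ∧ 1 ≤ φ.card ∧ r = φ.pr μ / φ.card}

/-- `D(f)`: the minimum of `D_μ(f)` over distributions `μ` on `f⁻¹(1)`. -/
noncomputable def Dof {n : ℕ} (f : (Fin n → Bool) → Bool) : ℝ :=
  sInf {r : ℝ | ∃ μ, IsDistOn μ f ∧ r = Dmu f μ}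

/-- The monotone variant `D⁺_μ(f)`, restricted to monotone CNF formulas. -/
noncomputable def DmuPlus {n : ℕ} (f : (Fin n → Bool) → Bool) (μ : (Fin n → Bool) → ℝ) : ℝ :=
  sSup {r : ℝ | ∃ φ : CNF n, φ.mono ∧ φ.onesided f ∧ 1 ≤ φ.card ∧ r = φ.pr μ / φ.card}

/-- `D⁺(f)`: the minimum of `D⁺_μ(f)` over distributions `μ` on `f⁻¹(1)`. -/
noncomputable def DPlus {n : ℕ} (f : (Fin n → Bool) → Bool) : ℝ :=
  sInf {r : ℝ | ∃ μ, IsDistOn μ f ∧ r = DmuPlus f μ}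

/-- A list of CNF formulas computes `f` as their pointwise disjunction. -/
def ComputedByOr {n : ℕ} (L : List (CNF n)) (f : (Fin n → Bool) → Bool) : Prop :=
  ∀ x, f x = true ↔ ∃ φ ∈ L, φ.sat x

/-- `L₃(f)`: the minimum size (total number of clauses) of a depth-3 formula computing `f`. -/
noncomputable def L3 {n : ℕ} (f : (Fin n → Bool) → Bool) : ℕ :=
  sInf {s : ℕ | ∃ L : List (CNF n), ComputedByOr L f ∧ s = (L.map Finset.card).sum}

/-- `L₃⁺(f)`: the minimum size of a depth-3 monotone formula computing `f`. -/
noncomputable def L3Plus {n : ℕ} (f : (Fin n → Bool) → Bool) : ℕ :=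
  sInf {s : ℕ | ∃ L : List (CNF n), (∀ φ ∈ L, φ.mono) ∧ ComputedByOr L f ∧
    s = (L.map Finset.card).sum}

/-- The number of ones in a Boolean input. -/
def ones {n : ℕ} (x : Fin n → Bool) : ℕ := (Finset.univ.filter fun i => x i = true).card

/-- The parity function: `1` iff the number of ones is odd. -/
def parityF (n : ℕ) : (Fin n → Bool) → Bool := fun x => decide (ones x % 2 = 1)

/-- The majority function: `1` iff the number of ones is at least `n/2`. -/
def majF (n : ℕ) : (Fin n → Bool) → Bool := fun x => decide (n ≤ 2 * ones x)

/-- `Pr_{x uniform in f⁻¹(1)}[φ(x) = 1]`. -/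
noncomputable def prUnif {n : ℕ} (f : (Fin n → Bool) → Bool) (φ : CNF n) : ℝ :=
  ((Finset.univ.filter fun x => f x = true ∧ φ.sat x).card : ℝ) /
    ((Finset.univ.filter fun x => f x = true).card : ℝ)

/-- `x` is an isolated solution of `φ`: `φ(x)=1` and `φ(y)=0` for every `y`
differing from `x` in exactly one coordinate. -/
def IsIsolated {n : ℕ} (φ : CNF n) (x : Fin n → Bool) : Prop :=
  φ.sat x ∧ ∀ y : Fin n → Bool, hammingDist x y = 1 → ¬ φ.sat y

instance Lit.finite (n : ℕ) : Finite (Lit n) :=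
  Finite.of_injective (fun l : Lit n => (l.idx, l.neg)) fun a b h => by
    cases a; cases b; simpa using h

section Aux

open Finset

variable {n : ℕ} {f : (Fin n → Bool) → Bool}

/-- The set whose supremum is `D_μ(f)`. It is nonempty because of the formula made of the single
empty clause, which is unsatisfiable and so respects every `f`. -/
def ratios (f : (Fin n → Bool) → Bool) (μ : (Fin n → Bool) → ℝ) : Set ℝ :=
  {r : ℝ | ∃ φ : CNF n, φ.onesided f ∧ 1 ≤ φ.card ∧ r = φ.pr μ / φ.card}

lemma emptyClause_onesided : CNF.onesided ({∅} : CNF n) f := by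
  intro x hx
  obtain ⟨l, hl, -⟩ := hx ∅ (by simp)
  simp at hl

lemma ratios_finite (μ : (Fin n → Bool) → ℝ) : (ratios f μ).Finite :=
  (Set.finite_range fun φ : CNF n => φ.pr μ / φ.card).subset
    fun _ ⟨φ, _, _, h⟩ => ⟨φ, h.symm⟩

lemma ratios_nonempty (μ : (Fin n → Bool) → ℝ) : (ratios f μ).Nonempty :=
  ⟨_, {∅}, emptyClause_onesided, by simp, rfl⟩

lemma ratio_le_Dmu (μ : (Fin n → Bool) → ℝ) {φ : CNF n} (h : φ.onesided f) (hc : 1 ≤ φ.card) :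
    φ.pr μ / φ.card ≤ Dmu f μ :=
  le_csSup (ratios_finite μ).bddAbove ⟨φ, h, hc, rfl⟩

lemma Dmu_le {μ : (Fin n → Bool) → ℝ} {C : ℝ}
    (h : ∀ φ : CNF n, φ.onesided f → 1 ≤ φ.card → φ.pr μ / φ.card ≤ C) : Dmu f μ ≤ C := by
  refine csSup_le (ratios_nonempty μ) ?_
  rintro r ⟨φ, h1, h2, rfl⟩
  exact h φ h1 h2

lemma CNF.pr_continuous (φ : CNF n) : Continuous fun μ : (Fin n → Bool) → ℝ => φ.pr μ := by
  unfold CNF.pr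
  refine continuous_finsetSum _ fun x _ => ?_
  split_ifs
  · exact continuous_apply x
  · exact continuous_const

lemma Dmu_continuous : Continuous (Dmu f) := by
  classical
  let _ : Fintype (CNF n) := Fintype.ofFinite _
  let T : Finset (CNF n) := univ.filter fun φ => φ.onesided f ∧ 1 ≤ φ.card
  have hT : T.Nonempty := ⟨{∅}, by simp [T, emptyClause_onesided]⟩
  have key : Dmu f = fun μ => T.sup' hT fun φ => φ.pr μ / φ.card := by
    funext μ
    apply le_antisymm
    · exact Dmu_le fun φ h hc =>
        Finset.le_sup' (fun φ : CNF n => φ.pr μ / φ.card) (by simp [T, h]; simpa using hc)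
    · refine Finset.sup'_le _ _ fun φ hφ => ?_
      obtain ⟨-, h, hc⟩ := Finset.mem_filter.1 hφ
      exact ratio_le_Dmu μ h hc
  rw [key]
  exact Continuous.finset_sup'_apply hT fun φ _ => φ.pr_continuous.div_const _

lemma isCompact_isDistOn : IsCompact {μ : (Fin n → Bool) → ℝ | IsDistOn μ f} := by
  -- The distributions form a closed subset of the standard simplex.
  refine (isCompact_stdSimplex ℝ (Fin n → Bool)).of_isClosed_subset ?_
    fun μ h => ⟨h.1, h.2.2⟩
  simp only [IsDistOn, Set.ofPred_and, Set.ofPred_forall]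
  refine IsClosed.inter (isClosed_iInter fun x => ?_) (IsClosed.inter
    (isClosed_iInter fun x => isClosed_iInter fun _ => ?_) ?_)
  · exact isClosed_le continuous_const (continuous_apply x)
  · exact isClosed_eq (continuous_apply x) continuous_const
  · exact isClosed_eq (by fun_prop) continuous_const

lemma exists_isDistOn (hf : ∃ x, f x = true) : ∃ μ, IsDistOn μ f := by
  obtain ⟨x₀, h₀⟩ := hf
  refine ⟨Pi.single x₀ 1, fun x => ?_, fun x hx => ?_, by simp⟩
  · by_cases h : x = x₀ <;> simp [h]
  · have : x ≠ x₀ := by rintro rfl; simp [h₀] at hx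
    simp [this]

lemma exists_minimizer (hf : ∃ x, f x = true) :
    ∃ μ, IsDistOn μ f ∧ ∀ ν, IsDistOn ν f → Dmu f μ ≤ Dmu f ν := by
  obtain ⟨μ, hμ, h⟩ := isCompact_isDistOn.exists_isMinOn (exists_isDistOn hf)
    (Dmu_continuous (f := f)).continuousOn
  exact ⟨μ, hμ, fun ν hν => h hν⟩

lemma Dof_eq_of_minimizer {μ : (Fin n → Bool) → ℝ} (hμ : IsDistOn μ f)
    (h : ∀ ν, IsDistOn ν f → Dmu f μ ≤ Dmu f ν) : Dof f = Dmu f μ := by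
  refine IsLeast.csInf_eq ⟨⟨μ, hμ, rfl⟩, ?_⟩
  rintro r ⟨ν, hν, rfl⟩
  exact h ν hν

variable (G : Subgroup (Equiv.Perm (Fin n → Bool))) [Fintype G]

/-- The average of `μ ∘ π` over `π ∈ G`. -/
noncomputable def avg (μ : (Fin n → Bool) → ℝ) (x : Fin n → Bool) : ℝ :=
  (∑ σ : G, μ (σ.1 x)) / Fintype.card G

variable {G}

lemma avg_invariant (μ : (Fin n → Bool) → ℝ) {π : Equiv.Perm (Fin n → Bool)} (hπ : π ∈ G)
    (x : Fin n → Bool) : avg G μ (π x) = avg G μ x := by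
  unfold avg
  congr 1
  exact Fintype.sum_equiv (Equiv.mulRight (⟨π, hπ⟩ : G)) _ _ fun σ => rfl

lemma isDistOn_avg (hfinv : ∀ π ∈ G, ∀ x, f (π x) = f x) {μ : (Fin n → Bool) → ℝ}
    (hμ : IsDistOn μ f) : IsDistOn (avg G μ) f := by
  obtain ⟨h0, hs, h1⟩ := hμ
  refine ⟨fun x => div_nonneg (sum_nonneg fun σ _ => h0 _) (Nat.cast_nonneg _),
    fun x hx => ?_, ?_⟩
  · unfold avg
    rw [sum_eq_zero fun σ _ => hs _ ((hfinv σ.1 σ.2 x).trans hx), zero_div]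
  · unfold avg
    rw [← sum_div, sum_comm, sum_congr rfl fun σ _ => (Equiv.sum_comp σ.1 μ).trans h1]
    simp

/-- The probability of a formula under the average is the average of its probabilities under the
distributions `μ ∘ π`. -/
lemma pr_avg (φ : CNF n) (μ : (Fin n → Bool) → ℝ) :
    φ.pr (avg G μ) = (∑ σ : G, φ.pr fun x => μ (σ.1 x)) / Fintype.card G := by
  unfold CNF.pr avg
  rw [sum_comm, sum_div]
  refine sum_congr rfl fun x _ => ?_
  split_ifs <;> simp

/-- Change of variables `y = π x`: if `φ = ψ ∘ π`, then `φ` has the same probability under `μ ∘ π`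
as `ψ` has under `μ`. -/
lemma pr_comp {φ ψ : CNF n} {π : Equiv.Perm (Fin n → Bool)} (h : ∀ x, φ.sat x ↔ ψ.sat (π x))
    (μ : (Fin n → Bool) → ℝ) : (φ.pr fun x => μ (π x)) = ψ.pr μ := by
  unfold CNF.pr
  rw [← Equiv.sum_comp π fun y => if ψ.sat y then μ y else 0]
  exact sum_congr rfl fun x _ => if_congr (h x) rfl rfl

lemma Dmu_avg_le
    (hform : ∀ π ∈ G, ∀ φ : CNF n, φ.onesided f →
      ∃ ψ : CNF n, ψ.onesided f ∧ (∀ x, φ.sat x ↔ ψ.sat (π x)) ∧ ψ.card = φ.card)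
    (μ : (Fin n → Bool) → ℝ) : Dmu f (avg G μ) ≤ Dmu f μ := by
  refine Dmu_le fun φ hφ hc => ?_
  have hterm : ∀ σ : G, (φ.pr fun x => μ (σ.1 x)) / φ.card ≤ Dmu f μ := fun σ => by
    obtain ⟨ψ, hψ, hsat, hcard⟩ := hform σ.1 σ.2 φ hφ
    rw [pr_comp hsat, ← hcard]
    exact ratio_le_Dmu μ hψ (hcard ▸ hc)
  rw [pr_avg, div_right_comm, sum_div, div_le_iff₀ (by exact_mod_cast Fintype.card_pos)]
  calc _ ≤ ∑ _σ : G, Dmu f μ := sum_le_sum fun σ _ => hterm σ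
    _ = _ := by simp [mul_comm]

end Aux

/-- a symmetry-invariant hardest distribution exists. -/
theorem stmt1 (n : ℕ) (hn : 1 ≤ n) (f : (Fin n → Bool) → Bool) (hf : ∃ x, f x = true)
    (G : Subgroup (Equiv.Perm (Fin n → Bool)))
    (hfinv : ∀ π ∈ G, ∀ x, f (π x) = f x)
    (hform : ∀ π ∈ G, ∀ φ : CNF n, φ.onesided f →
      ∃ ψ : CNF n, ψ.onesided f ∧ (∀ x, φ.sat x ↔ ψ.sat (π x)) ∧ ψ.card = φ.card) :
    ∃ μ : (Fin n → Bool) → ℝ, IsDistOn μ f ∧ (∀ π ∈ G, ∀ x, μ (π x) = μ x) ∧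
      Dof f = Dmu f μ := by
  let _ : Fintype G := Fintype.ofFinite G
  obtain ⟨μ, hμ, hmin⟩ := exists_minimizer hf
  refine ⟨avg G μ, isDistOn_avg hfinv hμ, fun π hπ x => avg_invariant μ hπ x, ?_⟩
  exact Dof_eq_of_minimizer (isDistOn_avg hfinv hμ)
    fun ν hν => (Dmu_avg_le hform μ).trans (hmin ν hν)
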